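/- There exist ε > 0 and C > 0 such that for every Δt ∈ (0, ε) and every i ∈ {1,…,k}, the quantities A_i(Δt) := (1−ρ_iΔt)(1−φ_i(Δt))²γ_iΔt / (1 − (1−ρ_iΔt)(1−φ_i(Δt))²) and C_i(Δt) := (1−ρ_iΔt)(β_i(Δt)(1−φ_i(Δt))(A_i(Δt)+γ_iΔt) + φ_i(Δt)(1−λ(Δt)β_Σ(Δt))) are well defined (the denominator in A_i is nonzero) and satisfy |A_i(Δt) − (k^{1/4}/(2(1+k)^{1/2}))·γ_i^{1/2}(σ_S/σ_K)^{1/2}·√Δt| ≤ C·Δt and |C_i(Δt) − (3/(2k^{1/4}(1+k)^{1/2}))·γ_i^{1/2}(σ_K/σ_S)^{1/2}·√Δt| ≤ C·Δt. -/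

import Mathlib

open Filter Topology Asymptotics

/-- The system in normalized variables. -/
def NSol {k : ℕ} (g r : Fin k → ℝ) (D b : ℝ) (x : Fin k → ℝ) : Prop :=
  0 < b ∧ b ^ 2 = ∑ i, x i ∧ ∀ i, 0 < x i ∧ x i ≤ 1 ∧
    (1 - x i) ^ 2 + r i * D * x i * (1 - x i) = g i * D * (b + 1 / b) * x i

/-- Smallness condition. -/
def NSmall {k : ℕ} (g r : Fin k → ℝ) (D : ℝ) : Prop :=
  ∀ i, r i * D < 1 ∧ g i * D * (k + 2) ≤ 1 / 12 ∧ 6 * k * (6 * k * (g i * D) + r i * D) ≤ 1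

lemma root_exists (a h : ℝ) (ha : 0 < a) (ha1 : a < 1) (hh : 0 < h) :
    let x := 2 / (2 - a + h + Real.sqrt (a ^ 2 + 2 * (2 - a) * h + h ^ 2))
    0 < x ∧ x ≤ 1 ∧ (1 - x) ^ 2 + a * x * (1 - x) = h * x := by
  intro x
  have hpos : 0 ≤ a ^ 2 + 2 * (2 - a) * h + h ^ 2 := by nlinarith [mul_pos ha hh]
  set t := Real.sqrt (a ^ 2 + 2 * (2 - a) * h + h ^ 2) with ht
  have ht2 : t ^ 2 = a ^ 2 + 2 * (2 - a) * h + h ^ 2 := Real.sq_sqrt hpos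
  have ht0 : 0 ≤ t := Real.sqrt_nonneg _
  have hta : a ≤ t := by
    apply Real.le_sqrt_of_sq_le
    nlinarith [mul_pos ha hh]
  have hden : 0 < 2 - a + h + t := by linarith
  refine ⟨by positivity, ?_, ?_⟩
  · rw [div_le_one hden]; linarith
  · have hx : x = 2 / (2 - a + h + t) := rfl
    rw [hx]
    field_simp
    nlinarith

lemma x_half (a h x : ℝ) (ha : 0 ≤ a) (hh : h < 1 / 2) (hx : 0 < x) (hx1 : x ≤ 1)
    (e : (1 - x) ^ 2 + a * x * (1 - x) = h * x) : 1 / 2 ≤ x := by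
  by_contra hc
  push Not at hc
  have : 0 ≤ a * x * (1 - x) := by
    have : 0 ≤ 1 - x := by linarith
    positivity
  nlinarith

lemma exists_sol {k : ℕ} (hk : 1 ≤ k) (g r : Fin k → ℝ) (hg : ∀ i, 0 < g i) (hr : ∀ i, 0 < r i)
    (D : ℝ) (hD : 0 < D) (hs : NSmall g r D) : ∃ b x, NSol g r D b x := by
  have hk' : (1 : ℝ) ≤ k := by exact_mod_cast hk
  let X : ℝ → Fin k → ℝ := fun b i => 2 / (2 - r i * D + g i * D * (b + 1 / b) +
    Real.sqrt ((r i * D) ^ 2 + 2 * (2 - r i * D) * (g i * D * (b + 1 / b))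
      + (g i * D * (b + 1 / b)) ^ 2))
  have hX : ∀ b, 0 < b → ∀ i, 0 < X b i ∧ X b i ≤ 1 ∧
      (1 - X b i) ^ 2 + r i * D * X b i * (1 - X b i) = g i * D * (b + 1 / b) * X b i := by
    intro b hb i
    exact root_exists (r i * D) (g i * D * (b + 1 / b)) (mul_pos (hr i) hD) (hs i).1
      (mul_pos (mul_pos (hg i) hD) (by positivity))
  have hsk : (1 / 2 : ℝ) ≤ Real.sqrt k := by
    apply Real.le_sqrt_of_sq_le; norm_num; linarith
  have hcont : ContinuousOn (fun b => b ^ 2 - ∑ i, X b i) (Set.Icc (1 / 2) (Real.sqrt k)) := by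
    apply ContinuousOn.sub (by fun_prop)
    apply continuousOn_finsetSum
    intro i _
    have hne : ∀ b ∈ Set.Icc (1 / 2 : ℝ) (Real.sqrt k), b ≠ 0 := by
      intro b hb; have := hb.1; linarith
    have hc : ContinuousOn (fun b : ℝ => g i * D * (b + 1 / b)) (Set.Icc (1 / 2) (Real.sqrt k)) := by
      apply ContinuousOn.mul continuousOn_const
      apply continuousOn_id.add
      exact continuousOn_const.div continuousOn_id hne
    apply ContinuousOn.div continuousOn_const
    · apply ContinuousOn.add
      · exact continuousOn_const.add hc
      · apply ContinuousOn.sqrt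
        exact (continuousOn_const.add (continuousOn_const.mul hc)).add (hc.pow 2)
    · intro b hb
      have hb0 : 0 < b := by have := hb.1; linarith
      have := (hX b hb0 i).1
      intro h0
      simp only [X] at this
      rw [h0] at this
      simp at this
  have hiv := intermediate_value_Icc hsk hcont
  have h0 : (0 : ℝ) ∈ Set.Icc ((1 / 2 : ℝ) ^ 2 - ∑ i, X (1 / 2) i)
      ((Real.sqrt k) ^ 2 - ∑ i, X (Real.sqrt k) i) := by
    constructor
    · have : ∑ i : Fin k, (1 / 2 : ℝ) ≤ ∑ i, X (1 / 2) i := by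
        apply Finset.sum_le_sum
        intro i _
        obtain ⟨h1, h2, h3⟩ := hX (1 / 2) (by norm_num) i
        refine x_half _ _ _ (mul_pos (hr i) hD).le ?_ h1 h2 h3
        have := (hs i).2.1
        have := mul_pos (hg i) hD
        norm_num
        nlinarith
      simp at this
      norm_num at this ⊢
      linarith
    · have : ∑ i, X (Real.sqrt k) i ≤ ∑ i : Fin k, (1 : ℝ) :=
        Finset.sum_le_sum fun i _ => (hX _ (by linarith) i).2.1
      simp at this
      rw [Real.sq_sqrt (by linarith)]
      linarith
  obtain ⟨b, hb, hb0⟩ := hiv h0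
  have hbp : 0 < b := by have := hb.1; linarith
  refine ⟨b, X b, hbp, ?_, hX b hbp⟩
  simp only at hb0
  linarith

/-- A priori bounds. -/
lemma sol_bounds {k : ℕ} (hk : 1 ≤ k) (g r : Fin k → ℝ) (hg : ∀ i, 0 < g i) (hr : ∀ i, 0 < r i)
    (D : ℝ) (hD : 0 < D) (hs : NSmall g r D) (b : ℝ) (x : Fin k → ℝ) (h : NSol g r D b x) :
    1 / 2 ≤ b ∧ b + 1 / b ≤ k + 2 ∧ 2 ≤ b + 1 / b ∧ ∀ i, 1 / 2 ≤ x i ∧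
      6 * k * (g i * D) ≤ 1 - x i := by
  obtain ⟨hb, hbs, hx⟩ := h
  have hk' : (1 : ℝ) ≤ k := by exact_mod_cast hk
  have hb2 : 1 / 2 ≤ b := by
    by_contra hc
    push Not at hc
    let i : Fin k := ⟨0, hk⟩
    have hxi : x i ≤ b ^ 2 := by
      rw [hbs]
      exact Finset.single_le_sum (f := x) (fun j _ => (hx j).1.le) (Finset.mem_univ i)
    obtain ⟨h1, h2, h3⟩ := hx i
    have hgD := mul_pos (hg i) hD
    have hrD := mul_pos (hr i) hD
    have hsm := (hs i).2.1
    have hgD2 : g i * D ≤ 1 / 36 := by nlinarith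
    have hle : (b + 1 / b) * x i ≤ (b + 1 / b) * b ^ 2 :=
      mul_le_mul_of_nonneg_left hxi (by positivity)
    have hle2 : (b + 1 / b) * b ^ 2 = b ^ 3 + b := by field_simp
    have hle3 : b ^ 3 + b ≤ 1 := by nlinarith [sq_nonneg b]
    have hx4 : x i ≤ 1 / 4 := by nlinarith
    have : 0 ≤ r i * D * x i * (1 - x i) := by
      have : 0 ≤ 1 - x i := by linarith
      positivity
    have : g i * D * (b + 1 / b) * x i ≤ 1 / 36 := by
      calc g i * D * (b + 1 / b) * x i = g i * D * ((b + 1 / b) * x i) := by ring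
        _ ≤ g i * D * 1 := mul_le_mul_of_nonneg_left (by linarith) hgD.le
        _ ≤ _ := by linarith
    nlinarith
  have hbk : b ≤ k := by
    have : ∑ i, x i ≤ ∑ i : Fin k, (1 : ℝ) := Finset.sum_le_sum fun i _ => (hx i).2.1
    simp at this
    nlinarith
  have hinv : 1 / b ≤ 2 := by
    rw [div_le_iff₀ hb]; linarith
  have hc2 : 2 ≤ b + 1 / b := by
    have : b + 1 / b - 2 = (b - 1) ^ 2 / b := by field_simp; ring
    have : 0 ≤ (b - 1) ^ 2 / b := by positivity
    linarith
  refine ⟨hb2, by linarith, hc2, fun i => ?_⟩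
  obtain ⟨h1, h2, h3⟩ := hx i
  have hgD := mul_pos (hg i) hD
  have hrD := mul_pos (hr i) hD
  obtain ⟨-, hs1, hs2⟩ := hs i
  have hhalf : 1 / 2 ≤ x i := by
    refine x_half _ _ _ hrD.le ?_ h1 h2 h3
    have : g i * D * (b + 1 / b) ≤ g i * D * (k + 2) :=
      mul_le_mul_of_nonneg_left (by linarith) hgD.le
    linarith
  refine ⟨hhalf, ?_⟩
  by_contra hc
  push Not at hc
  have e1 : g i * D ≤ (1 - x i) * ((1 - x i) + r i * D * x i) := by
    have : g i * D * 1 ≤ g i * D * ((b + 1 / b) * x i) :=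
      mul_le_mul_of_nonneg_left (by nlinarith) hgD.le
    nlinarith
  have e2 : (1 - x i) * ((1 - x i) + r i * D * x i) ≤
      (1 - x i) * (6 * k * (g i * D) + r i * D) :=
    mul_le_mul_of_nonneg_left (by nlinarith) (by linarith)
  have e3 : (1 - x i) * (6 * k * (g i * D) + r i * D) <
      6 * k * (g i * D) * (6 * k * (g i * D) + r i * D) :=
    mul_lt_mul_of_pos_right hc (by positivity)
  nlinarith

lemma sol_no_lt {k : ℕ} (hk : 1 ≤ k) (g r : Fin k → ℝ) (hg : ∀ i, 0 < g i) (hr : ∀ i, 0 < r i)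
    (D : ℝ) (hD : 0 < D) (hs : NSmall g r D) (b b' : ℝ) (x x' : Fin k → ℝ)
    (h : NSol g r D b x) (h' : NSol g r D b' x') : ¬ b < b' := by
  intro hlt
  obtain ⟨B1, -, -, B4⟩ := sol_bounds hk g r hg hr D hD hs b x h
  obtain ⟨B1', -, -, -⟩ := sol_bounds hk g r hg hr D hD hs b' x' h'
  obtain ⟨hb, hbs, hx⟩ := h
  obtain ⟨hb', hbs', hx'⟩ := h'
  have hk' : (1 : ℝ) ≤ k := by exact_mod_cast hk
  have key : ∀ i, x' i - x i ≤ (b' - b) / (2 * k) := by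
    intro i
    rw [le_div_iff₀ (by positivity)]
    obtain ⟨h1, h2, h3⟩ := hx i
    obtain ⟨h1', h2', h3'⟩ := hx' i
    have hgD := mul_pos (hg i) hD
    have hrD := mul_pos (hr i) hD
    have hy := (B4 i).2
    rcases le_or_gt (x' i) (x i) with hle | hgt
    · nlinarith
    have E : (x' i - x i) * (1 / (x i * x' i) - 1 + r i * D) =
        g i * D * ((b' - b) * (1 / (b * b') - 1)) := by
      have a1 : (1 - x i) ^ 2 / x i + r i * D * (1 - x i) = g i * D * (b + 1 / b) := by
        rw [div_add' _ _ _ h1.ne', div_eq_iff h1.ne']; linarith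
      have a2 : (1 - x' i) ^ 2 / x' i + r i * D * (1 - x' i) = g i * D * (b' + 1 / b') := by
        rw [div_add' _ _ _ h1'.ne', div_eq_iff h1'.ne']; linarith
      have a3 : (x' i - x i) * (1 / (x i * x' i) - 1 + r i * D) =
        ((1 - x i) ^ 2 / x i + r i * D * (1 - x i)) -
          ((1 - x' i) ^ 2 / x' i + r i * D * (1 - x' i)) := by field_simp; ring
      rw [a3, a1, a2]; field_simp; ring
    have f1 : 1 / (b * b') ≤ 4 := by
      rw [div_le_iff₀ (by positivity)]; nlinarith
    have f2 : (b' - b) * (1 / (b * b') - 1) ≤ (b' - b) * 3 :=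
      mul_le_mul_of_nonneg_left (by linarith) (by linarith)
    have f3 : g i * D * ((b' - b) * (1 / (b * b') - 1)) ≤ g i * D * ((b' - b) * 3) :=
      mul_le_mul_of_nonneg_left f2 hgD.le
    have f4 : 1 - x i ≤ 1 / (x i * x' i) - 1 := by
      have : 2 - x i ≤ 1 / (x i * x' i) := by
        rw [le_div_iff₀ (by positivity)]
        have : (2 - x i) * (x i * x' i) ≤ (2 - x i) * (x i * 1) := by
          apply mul_le_mul_of_nonneg_left _ (by linarith)
          exact mul_le_mul_of_nonneg_left h2' h1.le
        nlinarith [sq_nonneg (1 - x i)]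
      linarith
    have f5 : (x' i - x i) * (6 * k * (g i * D)) ≤
        (x' i - x i) * (1 / (x i * x' i) - 1 + r i * D) :=
      mul_le_mul_of_nonneg_left (by linarith) (by linarith)
    have f6 : (g i * D) * (3 * ((x' i - x i) * (2 * k))) ≤ (g i * D) * (3 * (b' - b)) := by
      nlinarith
    have := le_of_mul_le_mul_left f6 hgD
    linarith
  have hsum : ∑ i, (x' i - x i) ≤ ∑ i : Fin k, (b' - b) / (2 * k) :=
    Finset.sum_le_sum fun i _ => key i
  rw [Finset.sum_sub_distrib, ← hbs, ← hbs'] at hsum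
  simp at hsum
  have : (k : ℝ) * ((b' - b) / (2 * k)) = (b' - b) / 2 := by field_simp
  rw [this] at hsum
  nlinarith

lemma sol_unique {k : ℕ} (hk : 1 ≤ k) (g r : Fin k → ℝ) (hg : ∀ i, 0 < g i) (hr : ∀ i, 0 < r i)
    (D : ℝ) (hD : 0 < D) (hs : NSmall g r D) (b b' : ℝ) (x x' : Fin k → ℝ)
    (h : NSol g r D b x) (h' : NSol g r D b' x') : b' = b ∧ x' = x := by
  have hbb : b' = b := le_antisymm (not_lt.1 (sol_no_lt hk g r hg hr D hD hs b b' x x' h h'))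
    (not_lt.1 (sol_no_lt hk g r hg hr D hD hs b' b x' x h' h))
  subst hbb
  refine ⟨rfl, funext fun i => ?_⟩
  have B := ((sol_bounds hk g r hg hr D hD hs b' x h).2.2.2 i).2
  obtain ⟨h1, h2, h3⟩ := h.2.2 i
  obtain ⟨h1', h2', h3'⟩ := h'.2.2 i
  have hgD := mul_pos (hg i) hD
  have hrD := mul_pos (hr i) hD
  have hk' : (1 : ℝ) ≤ k := by exact_mod_cast hk
  have hlt : x i < 1 := by
    have : 0 < 6 * k * (g i * D) := by positivity
    linarith
  have hprod : (x' i - x i) * (1 - x i * x' i + r i * D * (x i * x' i)) = 0 := by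
    linear_combination x i * h3' * (-1) + x' i * h3
  have hpos : 0 < 1 - x i * x' i + r i * D * (x i * x' i) := by
    have : x i * x' i ≤ x i * 1 := mul_le_mul_of_nonneg_left h2' h1.le
    have : 0 < r i * D * (x i * x' i) := by positivity
    linarith
  rcases mul_eq_zero.1 hprod with h0 | h0
  · linarith
  · linarith

lemma small_eventually {k : ℕ} (g r : Fin k → ℝ) :
    ∀ᶠ d : ℝ in 𝓝[>] 0, NSmall g r (d ^ 2) := by
  unfold NSmall
  rw [eventually_all]
  intro i
  apply Filter.Eventually.filter_mono nhdsWithin_le_nhds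
  have h1 : Tendsto (fun d : ℝ => r i * d ^ 2) (𝓝 0) (𝓝 0) := by
    have : Continuous (fun d : ℝ => r i * d ^ 2) := by fun_prop
    simpa using this.tendsto 0
  have h2 : Tendsto (fun d : ℝ => g i * d ^ 2 * (k + 2)) (𝓝 0) (𝓝 0) := by
    have : Continuous (fun d : ℝ => g i * d ^ 2 * (k + 2)) := by fun_prop
    simpa using this.tendsto 0
  have h3 : Tendsto (fun d : ℝ => 6 * k * (6 * k * (g i * d ^ 2) + r i * d ^ 2)) (𝓝 0) (𝓝 0) := by
    have : Continuous (fun d : ℝ => 6 * (k : ℝ) * (6 * k * (g i * d ^ 2) + r i * d ^ 2)) := by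
      fun_prop
    simpa using this.tendsto 0
  filter_upwards [h1.eventually_lt_const (u := 1) (by norm_num),
    h2.eventually_le_const (u := 1 / 12) (by norm_num),
    h3.eventually_le_const (u := 1) (by norm_num)] with d a1 a2 a3
  exact ⟨a1, a2, a3⟩

/-- `f d = f0 + O(d)` as `d → 0+`. -/
def Ap (f : ℝ → ℝ) (f0 : ℝ) : Prop :=
  (fun d => f d - f0) =O[𝓝[>] (0 : ℝ)] (fun d => d)

lemma Ap.tendsto {f : ℝ → ℝ} {a : ℝ} (h : Ap f a) : Tendsto f (𝓝[>] 0) (𝓝 a) := by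
  have h0 : Tendsto (fun d : ℝ => d) (𝓝[>] 0) (𝓝 0) :=
    tendsto_id.mono_left nhdsWithin_le_nhds
  have := (h.trans_tendsto h0).add_const a
  simpa using this

lemma Ap.comp {f : ℝ → ℝ} {a : ℝ} (h : Ap f a) {u : ℝ → ℝ} (hu : DifferentiableAt ℝ u a) :
    Ap (fun d => u (f d)) (u a) :=
  (hu.isBigO_sub.comp_tendsto h.tendsto).trans h

lemma Ap.const (a : ℝ) : Ap (fun _ => a) a := by
  unfold Ap; simp [isBigO_zero]

lemma Ap.id : Ap (fun d => d) 0 := by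
  unfold Ap; simpa using isBigO_refl _ _

lemma Ap.add {f u : ℝ → ℝ} {a c : ℝ} (h : Ap f a) (h' : Ap u c) :
    Ap (fun d => f d + u d) (a + c) := by
  have := IsBigO.add h h'
  unfold Ap
  refine this.congr_left fun d => ?_
  ring

lemma Ap.mul {f u : ℝ → ℝ} {a c : ℝ} (h : Ap f a) (h' : Ap u c) :
    Ap (fun d => f d * u d) (a * c) := by
  have h1 : (fun d => (f d - a) * u d) =O[𝓝[>] (0 : ℝ)] (fun d => d * 1) :=
    IsBigO.mul h (h'.tendsto.isBigO_one ℝ)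
  have h2 : (fun d => a * (u d - c)) =O[𝓝[>] (0 : ℝ)] (fun d => d) := h'.const_mul_left a
  simp only [mul_one] at h1
  refine (h1.add h2).congr_left fun d => ?_
  ring

lemma Ap.sub {f u : ℝ → ℝ} {a c : ℝ} (h : Ap f a) (h' : Ap u c) :
    Ap (fun d => f d - u d) (a - c) := by
  have := IsBigO.sub h h'
  refine this.congr_left fun d => ?_
  ring

lemma Ap.inv {f : ℝ → ℝ} {a : ℝ} (h : Ap f a) (ha : a ≠ 0) : Ap (fun d => (f d)⁻¹) a⁻¹ :=
  h.comp (differentiableAt_inv ha)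

lemma Ap.sqrt {f : ℝ → ℝ} {a : ℝ} (h : Ap f a) (ha : a ≠ 0) :
    Ap (fun d => Real.sqrt (f d)) (Real.sqrt a) :=
  h.comp (Real.hasDerivAt_sqrt ha).differentiableAt

lemma Ap.sum {k : ℕ} {f : Fin k → ℝ → ℝ} {a : Fin k → ℝ} (h : ∀ i, Ap (f i) (a i)) :
    Ap (fun d => ∑ i, f i d) (∑ i, a i) := by
  have := IsBigO.sum (s := Finset.univ) (fun i _ => h i)
  refine this.congr_left fun d => ?_
  simp

lemma Ap.congr {f u : ℝ → ℝ} {a : ℝ} (h : Ap f a) (e : ∀ᶠ d in 𝓝[>] (0 : ℝ), f d = u d) :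
    Ap u a := by
  refine IsBigO.congr' h ?_ EventuallyEq.rfl
  filter_upwards [e] with d hd
  rw [hd]

lemma sol_asym {k : ℕ} (hk : 1 ≤ k) (g r : Fin k → ℝ) (hg : ∀ i, 0 < g i) (hr : ∀ i, 0 < r i)
    (b : ℝ → ℝ) (x : ℝ → Fin k → ℝ)
    (h : ∀ᶠ d in 𝓝[>] (0 : ℝ), NSol g r (d ^ 2) (b d) (x d)) :
    Ap b (Real.sqrt k) ∧ ∀ i, Ap (fun d => x d i) 1 ∧
      Ap (fun d => (1 - x d i) / d) (Real.sqrt (g i * (Real.sqrt k + (Real.sqrt k)⁻¹))) := by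
  have hk' : (1 : ℝ) ≤ k := by exact_mod_cast hk
  have hsk : 0 < Real.sqrt k := Real.sqrt_pos.2 (by linarith)
  have hpos : ∀ᶠ d : ℝ in 𝓝[>] (0 : ℝ), 0 < d := eventually_mem_nhdsWithin
  have hsm := small_eventually g r
  have hx : ∀ i, Ap (fun d => x d i) 1 := by
    intro i
    refine IsBigO.of_bound (Real.sqrt (g i * (k + 2))) ?_
    filter_upwards [hpos, hsm, h] with d hd hs hN
    obtain ⟨-, hc, hc2, -⟩ := sol_bounds hk g r hg hr _ (by positivity) hs _ _ hN
    obtain ⟨h1, h2, h3⟩ := hN.2.2 i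
    rw [Real.norm_eq_abs, Real.norm_eq_abs, abs_of_pos hd]
    apply abs_le_of_sq_le_sq _ (by positivity)
    rw [mul_pow, Real.sq_sqrt (by have := hg i; positivity)]
    have hgd : 0 < g i * d ^ 2 := mul_pos (hg i) (by positivity)
    have e1 : 0 ≤ r i * d ^ 2 * x d i * (1 - x d i) := by
      have : 0 ≤ 1 - x d i := by linarith
      have := hr i
      positivity
    have e2 : g i * d ^ 2 * ((b d + 1 / b d) * x d i) ≤ g i * d ^ 2 * ((k + 2) * 1) := by
      apply mul_le_mul_of_nonneg_left _ hgd.le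
      apply mul_le_mul hc h2 h1.le (by positivity)
    nlinarith
  have hb : Ap b (Real.sqrt k) := by
    have h1 : Ap (fun d => ∑ i, x d i) (∑ i : Fin k, (1 : ℝ)) := Ap.sum hx
    simp only [Finset.sum_const, Finset.card_univ, Fintype.card_fin, nsmul_eq_mul, mul_one] at h1
    refine (h1.sqrt (by linarith)).congr ?_
    filter_upwards [h] with d hN
    rw [← hN.2.1, Real.sqrt_sq hN.1.le]
  refine ⟨hb, fun i => ⟨hx i, ?_⟩⟩
  have hz2 : Ap (fun d => g i * (b d + (b d)⁻¹) * x d i - r i * (x d i * (1 - x d i)))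
      (g i * (Real.sqrt k + (Real.sqrt k)⁻¹)) := by
    have := (((Ap.const (g i)).mul (hb.add (hb.inv hsk.ne'))).mul (hx i)).sub
      ((Ap.const (r i)).mul ((hx i).mul ((Ap.const 1).sub (hx i))))
    simpa using this
  have hne : g i * (Real.sqrt k + (Real.sqrt k)⁻¹) ≠ 0 := by
    have := hg i
    positivity
  refine (hz2.sqrt hne).congr ?_
  filter_upwards [hpos, h] with d hd hN
  obtain ⟨h1, h2, h3⟩ := hN.2.2 i
  have : g i * (b d + (b d)⁻¹) * x d i - r i * (x d i * (1 - x d i)) = ((1 - x d i) / d) ^ 2 := by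
    rw [div_pow, eq_div_iff (by positivity), ← one_div]
    linarith
  rw [this, Real.sqrt_sq]
  have : 0 ≤ 1 - x d i := by linarith
  positivity

/-- normalized `A_i` -/
noncomputable def An (r γ d x : ℝ) : ℝ :=
  (1 - r * d ^ 2) * x ^ 2 * γ * d ^ 2 / (1 - (1 - r * d ^ 2) * x ^ 2)

/-- normalized `C_i` -/
noncomputable def Cn (s r γ d b x : ℝ) : ℝ :=
  (1 - r * d ^ 2) * (s * x / b * x * (An r γ d x + γ * d ^ 2) + (1 - x) * (1 / (1 + b ^ 2)))

lemma A_asym (r γ z0 : ℝ) (hz : 0 < z0) (x : ℝ → ℝ) (hx : Ap x 1)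
    (hz : Ap (fun d => (1 - x d) / d) z0) :
    Ap (fun d => An r γ d (x d) / d) (γ / (2 * z0)) := by
  have h1 : Ap (fun d => (1 - r * (d * d)) * (x d * x d) * γ *
      (2 * ((1 - x d) / d) - (1 - x d) * ((1 - x d) / d) + r * (d * (x d * x d)))⁻¹)
      ((1 - r * (0 * 0)) * (1 * 1) * γ *
      (2 * z0 - (1 - 1) * z0 + r * (0 * (1 * 1)))⁻¹) := by
    refine Ap.mul (Ap.mul (Ap.mul ?_ ?_) (Ap.const _)) (Ap.inv ?_ ?_)
    · exact (Ap.const 1).sub ((Ap.const r).mul (Ap.id.mul Ap.id))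
    · exact hx.mul hx
    · exact (((Ap.const 2).mul hz).sub (((Ap.const 1).sub hx).mul hz)).add
        ((Ap.const r).mul (Ap.id.mul (hx.mul hx)))
    · simp; positivity
  have e : ((1 - r * (0 * 0)) * (1 * 1) * γ *
      (2 * z0 - (1 - 1) * z0 + r * (0 * (1 * 1)))⁻¹) = γ / (2 * z0) := by
    simp [div_eq_mul_inv]
  rw [e] at h1
  refine h1.congr ?_
  have hpos : ∀ᶠ d : ℝ in 𝓝[>] (0 : ℝ), 0 < d := eventually_mem_nhdsWithin
  filter_upwards [hpos] with d hd
  have : 1 - (1 - r * d ^ 2) * x d ^ 2 = d *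
      (2 * ((1 - x d) / d) - (1 - x d) * ((1 - x d) / d) + r * (d * (x d * x d))) := by
    field_simp
    ring
  unfold An
  rw [this]
  generalize (2 * ((1 - x d) / d) - (1 - x d) * ((1 - x d) / d) + r * (d * (x d * x d))) = w
  by_cases hw : w = 0
  · simp [hw]
  field_simp

lemma C_asym (s r γ z0 b0 : ℝ) (hz0 : 0 < z0) (hb0 : 0 < b0) (b x : ℝ → ℝ) (hb : Ap b b0)
    (hx : Ap x 1) (hz : Ap (fun d => (1 - x d) / d) z0) :
    Ap (fun d => Cn s r γ d (b d) (x d) / d) (s / b0 * (γ / (2 * z0)) + z0 / (1 + b0 ^ 2)) := by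
  have hA := A_asym r γ z0 hz0 x hx hz
  have h1 : Ap (fun d => (1 - r * (d * d)) * (s * x d * (b d)⁻¹ * x d *
      (An r γ d (x d) / d + γ * d) + (1 - x d) / d * (1 + b d * b d)⁻¹))
      ((1 - r * (0 * 0)) * (s * 1 * b0⁻¹ * 1 * (γ / (2 * z0) + γ * 0) + z0 * (1 + b0 * b0)⁻¹)) := by
    refine Ap.mul ?_ (Ap.add (Ap.mul (Ap.mul (Ap.mul ?_ (hb.inv hb0.ne')) hx) ?_) (Ap.mul hz ?_))
    · exact (Ap.const 1).sub ((Ap.const r).mul (Ap.id.mul Ap.id))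
    · exact (Ap.const s).mul hx
    · exact hA.add ((Ap.const γ).mul Ap.id)
    · exact ((Ap.const 1).add (hb.mul hb)).inv (by positivity)
  have e : ((1 - r * (0 * 0)) * (s * 1 * b0⁻¹ * 1 * (γ / (2 * z0) + γ * 0) +
      z0 * (1 + b0 * b0)⁻¹)) = s / b0 * (γ / (2 * z0)) + z0 / (1 + b0 ^ 2) := by
    simp [div_eq_mul_inv, pow_two]
  rw [e] at h1
  refine h1.congr ?_
  have hpos : ∀ᶠ d : ℝ in 𝓝[>] (0 : ℝ), 0 < d := eventually_mem_nhdsWithin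
  filter_upwards [hpos] with d hd
  unfold Cn
  generalize An r γ d (x d) = a
  rw [one_div, div_eq_mul_inv (s * x d)]
  have : 1 + b d ^ 2 = 1 + b d * b d := by ring
  rw [this]
  generalize (1 + b d * b d)⁻¹ = w
  generalize (b d)⁻¹ = v
  field_simp

lemma Ap.bound {f : ℝ → ℝ} {a : ℝ} (h : Ap (fun d => f d / d) a) :
    ∃ C, ∀ᶠ d in 𝓝[>] (0 : ℝ), |f d - a * d| ≤ C * d ^ 2 := by
  obtain ⟨C, hC⟩ := IsBigO.bound h
  refine ⟨C, ?_⟩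
  have hpos : ∀ᶠ d : ℝ in 𝓝[>] (0 : ℝ), 0 < d := eventually_mem_nhdsWithin
  filter_upwards [hpos, hC] with d hd hc
  rw [Real.norm_eq_abs, Real.norm_eq_abs, abs_of_pos hd] at hc
  have : f d - a * d = (f d / d - a) * d := by field_simp
  rw [this, abs_mul, abs_of_pos hd]
  nlinarith

lemma const_facts (k : ℝ) (hk : 1 ≤ k) (s γ : ℝ) (hs : 0 < s) (hγ : 0 < γ) :
    γ / (2 * Real.sqrt (s * γ * (Real.sqrt k + (Real.sqrt k)⁻¹))) =
      k ^ ((1 : ℝ) / 4) / (2 * Real.sqrt (1 + k)) * Real.sqrt γ * Real.sqrt s⁻¹ ∧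
    s / Real.sqrt k * (γ / (2 * Real.sqrt (s * γ * (Real.sqrt k + (Real.sqrt k)⁻¹)))) +
      Real.sqrt (s * γ * (Real.sqrt k + (Real.sqrt k)⁻¹)) / (1 + Real.sqrt k ^ 2) =
      3 / (2 * k ^ ((1 : ℝ) / 4) * Real.sqrt (1 + k)) * Real.sqrt γ * Real.sqrt s := by
  have hk0 : 0 < k := by linarith
  set K := k ^ ((1 : ℝ) / 4) with hK
  have hKp : 0 < K := Real.rpow_pos_of_pos hk0 _
  have hK2 : Real.sqrt k = K ^ 2 := by
    rw [Real.sqrt_eq_rpow, hK, ← Real.rpow_natCast, ← Real.rpow_mul hk0.le]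
    norm_num
  have hK4 : K ^ 4 = k := by
    have : (Real.sqrt k) ^ 2 = k := Real.sq_sqrt hk0.le
    rw [hK2] at this
    rw [← this]; ring
  obtain ⟨m, hm, hm2⟩ : ∃ m, 0 < m ∧ m = Real.sqrt (1 + k) := ⟨_, Real.sqrt_pos.2 (by linarith), rfl⟩
  have hmm : m ^ 2 = 1 + k := by rw [hm2]; exact Real.sq_sqrt (by linarith)
  obtain ⟨t, ht, ht2⟩ : ∃ t, 0 < t ∧ t = Real.sqrt s := ⟨_, Real.sqrt_pos.2 hs, rfl⟩
  have htt : t ^ 2 = s := by rw [ht2]; exact Real.sq_sqrt hs.le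
  obtain ⟨c, hc, hc2⟩ : ∃ t, 0 < t ∧ t = Real.sqrt γ := ⟨_, Real.sqrt_pos.2 hγ, rfl⟩
  have hcc : c ^ 2 = γ := by rw [hc2]; exact Real.sq_sqrt hγ.le
  have hz : Real.sqrt (s * γ * (Real.sqrt k + (Real.sqrt k)⁻¹)) = t * c * m / K := by
    rw [Real.sqrt_eq_iff_mul_self_eq_of_pos (by positivity), hK2, ← htt, ← hcc]
    field_simp
    rw [hmm, ← hK4]; ring
  rw [hz, hK2, Real.sqrt_inv, ← hm2, ← ht2, ← hc2]
  have h4 : 1 + (K ^ 2) ^ 2 = m ^ 2 := by rw [hmm, ← hK4]; ring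
  rw [h4]
  constructor
  · rw [← hcc]; field_simp
  · rw [← hcc, ← htt]; field_simp; norm_num

lemma to_NSol {k : ℕ} (s : ℝ) (hs : 0 < s) (γ ρ : Fin k → ℝ) (D B : ℝ) (β : Fin k → ℝ)
    (h1 : B = ∑ j, β j)
    (h2 : ∀ i, 0 = (1 - ρ i * D) * (β i) ^ 2 * B ^ 2
              - (2 - ρ i * D + B * γ i * D) * s ^ 2 * β i * B
              + s ^ 4 * (1 - β i * γ i * D))
    (h3 : 0 < B) (h4 : ∀ i, 0 < β i * B ∧ β i * B ≤ s ^ 2) :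
    NSol (fun i => s * γ i) ρ D (B / s) (fun i => β i * B / s ^ 2) := by
  refine ⟨by positivity, ?_, fun i => ⟨?_, ?_, ?_⟩⟩
  · rw [← Finset.sum_div, ← Finset.sum_mul, ← h1]; field_simp
  · have := (h4 i).1; positivity
  · rw [div_le_one (by positivity)]; exact (h4 i).2
  · have := h2 i
    field_simp
    linear_combination (-1) * this

lemma from_NSol {k : ℕ} (s : ℝ) (hs : 0 < s) (γ ρ : Fin k → ℝ) (D b : ℝ) (x : Fin k → ℝ)
    (h : NSol (fun i => s * γ i) ρ D b x) :
    s * b = ∑ j, s * x j / b ∧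
    (∀ i, 0 = (1 - ρ i * D) * (s * x i / b) ^ 2 * (s * b) ^ 2
              - (2 - ρ i * D + (s * b) * γ i * D) * s ^ 2 * (s * x i / b) * (s * b)
              + s ^ 4 * (1 - (s * x i / b) * γ i * D)) ∧
    0 < s * b ∧ (∀ i, 0 < (s * x i / b) * (s * b) ∧ (s * x i / b) * (s * b) ≤ s ^ 2) := by
  obtain ⟨hb, hbs, hx⟩ := h
  have hxx : ∀ i, (s * x i / b) * (s * b) = s ^ 2 * x i := by
    intro i; field_simp
  refine ⟨?_, fun i => ?_, by positivity, fun i => ?_⟩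
  · rw [← Finset.sum_div, ← Finset.mul_sum, ← hbs]; field_simp
  · obtain ⟨h1, h2, h3⟩ := hx i
    field_simp at h3 ⊢
    linear_combination (-s ^ 4) * h3
  · rw [hxx]
    obtain ⟨h1, h2, -⟩ := hx i
    refine ⟨by positivity, ?_⟩
    nlinarith [mul_pos hs hs]

/-- for small `Δt > 0` and each `i`, the value-function coefficients
`A_i = (1−ρ_iΔt)(1−φ_i)²γ_iΔt / (1 − (1−ρ_iΔt)(1−φ_i)²)` and
`C_i = (1−ρ_iΔt)(β_i(1−φ_i)(A_i+γ_iΔt) + φ_i(1−λβ_Σ))` are well defined and satisfy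
`A_i = (k^{1/4}/(2(1+k)^{1/2}))γ_i^{1/2}(σ_S/σ_K)^{1/2}√Δt + O(Δt)` and
`C_i = (3/(2k^{1/4}(1+k)^{1/2}))γ_i^{1/2}(σ_K/σ_S)^{1/2}√Δt + O(Δt)`. -/
theorem stmt10 (k : ℕ) (hk : 1 ≤ k) (σS σK : ℝ) (hσS : 0 < σS) (hσK : 0 < σK)
    (γ ρ : Fin k → ℝ) (hγ : ∀ i, 0 < γ i) (hρ : ∀ i, 0 < ρ i) :
    ∃ ε > 0, ∃ C > 0, ∀ Δt : ℝ, 0 < Δt → Δt < ε →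
      ∃ (βSum lam : ℝ) (β φ A Ci : Fin k → ℝ),
        (βSum = ∑ j, β j ∧
          (∀ i, 0 = (1 - ρ i * Δt) * (β i) ^ 2 * βSum ^ 2
              - (2 - ρ i * Δt + βSum * γ i * Δt) * (σK / σS) ^ 2 * β i * βSum
              + (σK / σS) ^ 4 * (1 - β i * γ i * Δt)) ∧
          0 < βSum ∧
          (∀ i, 0 < β i * βSum ∧ β i * βSum ≤ σK ^ 2 / σS ^ 2)) ∧
        (∀ q : ℝ × (Fin k → ℝ),
          (q.1 = ∑ j, q.2 j ∧
            (∀ i, 0 = (1 - ρ i * Δt) * (q.2 i) ^ 2 * q.1 ^ 2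
                - (2 - ρ i * Δt + q.1 * γ i * Δt) * (σK / σS) ^ 2 * q.2 i * q.1
                + (σK / σS) ^ 4 * (1 - q.2 i * γ i * Δt)) ∧
            0 < q.1 ∧
            (∀ i, 0 < q.2 i * q.1 ∧ q.2 i * q.1 ≤ σK ^ 2 / σS ^ 2)) →
          q.1 = βSum ∧ q.2 = β) ∧
        lam = βSum * σS ^ 2 / (σK ^ 2 + βSum ^ 2 * σS ^ 2) ∧
        (∀ i, φ i = 1 - lam * β i / (1 - lam * βSum)) ∧
        (∀ i, 1 - (1 - ρ i * Δt) * (1 - φ i) ^ 2 ≠ 0) ∧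
        (∀ i, A i = (1 - ρ i * Δt) * (1 - φ i) ^ 2 * γ i * Δt
            / (1 - (1 - ρ i * Δt) * (1 - φ i) ^ 2)) ∧
        (∀ i, Ci i = (1 - ρ i * Δt)
            * (β i * (1 - φ i) * (A i + γ i * Δt) + φ i * (1 - lam * βSum))) ∧
        (∀ i, |A i - (k : ℝ) ^ ((1 : ℝ) / 4) / (2 * Real.sqrt (1 + k))
              * Real.sqrt (γ i) * Real.sqrt (σS / σK) * Real.sqrt Δt| ≤ C * Δt) ∧
        (∀ i, |Ci i - 3 / (2 * (k : ℝ) ^ ((1 : ℝ) / 4) * Real.sqrt (1 + k))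
              * Real.sqrt (γ i) * Real.sqrt (σK / σS) * Real.sqrt Δt| ≤ C * Δt) := by
  obtain ⟨s, hs, rfl⟩ : ∃ s, 0 < s ∧ σK = s * σS :=
    ⟨σK / σS, by positivity, by field_simp⟩
  have hs1 : s * σS / σS = s := by field_simp
  have hs2 : (s * σS) ^ 2 / σS ^ 2 = s ^ 2 := by field_simp
  have hs3 : σS / (s * σS) = s⁻¹ := by field_simp
  rw [hs1, hs2, hs3]
  have hk' : (1 : ℝ) ≤ k := by exact_mod_cast hk
  have hsk : 0 < Real.sqrt k := Real.sqrt_pos.2 (by linarith)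
  have hg : ∀ i, 0 < (fun i => s * γ i) i := fun i => mul_pos hs (hγ i)
  have hpos : ∀ᶠ d : ℝ in 𝓝[>] (0 : ℝ), 0 < d := eventually_mem_nhdsWithin
  have hsm := small_eventually (fun i => s * γ i) ρ
  have hex : ∀ d : ℝ, ∃ p : ℝ × (Fin k → ℝ), 0 < d → NSmall (fun i => s * γ i) ρ (d ^ 2) →
      NSol (fun i => s * γ i) ρ (d ^ 2) p.1 p.2 := by
    intro d
    by_cases h : 0 < d ∧ NSmall (fun i => s * γ i) ρ (d ^ 2)
    · obtain ⟨b, x, hbx⟩ := exists_sol hk _ ρ hg hρ (d ^ 2) (pow_pos h.1 2) h.2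
      exact ⟨(b, x), fun _ _ => hbx⟩
    · exact ⟨(0, 0), fun h1 h2 => absurd ⟨h1, h2⟩ h⟩
  choose p hp using hex
  have hN : ∀ᶠ d in 𝓝[>] (0 : ℝ), NSol (fun i => s * γ i) ρ (d ^ 2) (p d).1 (p d).2 := by
    filter_upwards [hpos, hsm] with d h1 h2 using hp d h1 h2
  obtain ⟨hb, hx⟩ := sol_asym hk _ ρ hg hρ (fun d => (p d).1) (fun d => (p d).2) hN
  have hz0 : ∀ i, 0 < Real.sqrt (s * γ i * (Real.sqrt k + (Real.sqrt k)⁻¹)) := by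
    intro i
    have := hγ i
    positivity
  have hA := fun i => (A_asym (ρ i) (γ i) _ (hz0 i) _ (hx i).1 (hx i).2).bound
  have hC := fun i => (C_asym s (ρ i) (γ i) _ _ (hz0 i) hsk _ _ hb (hx i).1 (hx i).2).bound
  choose CA hCA using hA
  choose CC hCC using hC
  have hall : ∀ᶠ d in 𝓝[>] (0 : ℝ), 0 < d ∧ NSmall (fun i => s * γ i) ρ (d ^ 2) ∧ _ ∧ _ :=
    hpos.and (hsm.and ((eventually_all.2 hCA).and (eventually_all.2 hCC)))
  obtain ⟨δ, hδ, hδ2⟩ := mem_nhdsGT_iff_exists_Ioo_subset.1 hall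
  have hδ0 : 0 < δ := hδ
  have hA0 : ∀ i, CA i ≤ 1 + ∑ i, |CA i| + ∑ i, |CC i| := by
    intro i
    have h1 := Finset.single_le_sum (f := fun i => |CA i|) (fun j _ => abs_nonneg _)
      (Finset.mem_univ i)
    have h2 : 0 ≤ ∑ i, |CC i| := Finset.sum_nonneg fun j _ => abs_nonneg _
    have h3 := le_abs_self (CA i)
    linarith
  have hC0 : ∀ i, CC i ≤ 1 + ∑ i, |CA i| + ∑ i, |CC i| := by
    intro i
    have h1 := Finset.single_le_sum (f := fun i => |CC i|) (fun j _ => abs_nonneg _)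
      (Finset.mem_univ i)
    have h2 : 0 ≤ ∑ i, |CA i| := Finset.sum_nonneg fun j _ => abs_nonneg _
    have h3 := le_abs_self (CC i)
    linarith
  refine ⟨δ ^ 2, by positivity, 1 + ∑ i, |CA i| + ∑ i, |CC i|, ?_, ?_⟩
  · have h1 : 0 ≤ ∑ i, |CC i| := Finset.sum_nonneg fun j _ => abs_nonneg _
    have h2 : 0 ≤ ∑ i, |CA i| := Finset.sum_nonneg fun j _ => abs_nonneg _
    linarith
  intro Δt hΔ hΔε
  obtain ⟨d, hd, rfl⟩ : ∃ d, 0 < d ∧ Δt = d ^ 2 :=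
    ⟨Real.sqrt Δt, Real.sqrt_pos.2 hΔ, (Real.sq_sqrt hΔ.le).symm⟩
  have hdδ : d < δ := lt_of_pow_lt_pow_left₀ 2 hδ0.le hΔε
  obtain ⟨-, hsmd, hAd, hCd⟩ := hδ2 ⟨hd, hdδ⟩
  have hsol := hp d hd hsmd
  rw [Real.sqrt_sq hd.le]
  set b := (p d).1 with hbdef
  set x := (p d).2 with hxdef
  have hbpos : 0 < b := hsol.1
  have hlam : s * b * σS ^ 2 / ((s * σS) ^ 2 + (s * b) ^ 2 * σS ^ 2) = b / (s * (1 + b ^ 2)) := by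
    field_simp
  have hlb : 1 - b / (s * (1 + b ^ 2)) * (s * b) = 1 / (1 + b ^ 2) := by
    field_simp
    ring
  have hphi : ∀ i, 1 - x i = 1 - b / (s * (1 + b ^ 2)) * (s * x i / b) /
      (1 - b / (s * (1 + b ^ 2)) * (s * b)) := by
    intro i
    rw [hlb]
    field_simp
  obtain ⟨F1, F2, F3, F4⟩ := from_NSol s hs γ ρ (d ^ 2) b x hsol
  refine ⟨s * b, b / (s * (1 + b ^ 2)), fun i => s * x i / b, fun i => 1 - x i,
    fun i => An (ρ i) (γ i) d (x i), fun i => Cn s (ρ i) (γ i) d b (x i),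
    ⟨F1, F2, F3, F4⟩, ?_, hlam.symm, hphi, ?_, ?_, ?_, ?_, ?_⟩
  · rintro ⟨B, β⟩ ⟨h1, h2, h3, h4⟩
    simp only at h1 h2 h3 h4
    obtain ⟨u1, u2⟩ := sol_unique hk _ ρ hg hρ (d ^ 2) hΔ hsmd _ _ _ _ hsol
      (to_NSol s hs γ ρ (d ^ 2) B β h1 h2 h3 h4)
    have hB : B = s * b := by
      rw [← u1]; field_simp
    refine ⟨hB, funext fun i => ?_⟩
    have := congrFun u2 i
    simp only at this ⊢
    rw [← this, ← u1]
    field_simp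
  · intro i
    have hb2 := ((sol_bounds hk _ ρ hg hρ (d ^ 2) hΔ hsmd _ _ hsol).2.2.2 i).2
    obtain ⟨h1, h2, -⟩ := hsol.2.2 i
    have hr := (hsmd i).1
    have hr0 : 0 < ρ i * d ^ 2 := mul_pos (hρ i) hΔ
    have : 0 < 1 - (1 - ρ i * d ^ 2) * (1 - (1 - x i)) ^ 2 := by
      have e : 1 - (1 - ρ i * d ^ 2) * (1 - (1 - x i)) ^ 2 =
        (1 - x i) * (1 + x i) + ρ i * d ^ 2 * x i ^ 2 := by ring
      rw [e]
      have : 0 ≤ (1 - x i) * (1 + x i) := mul_nonneg (by linarith) (by linarith)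
      have : 0 < ρ i * d ^ 2 * x i ^ 2 := by positivity
      linarith
    exact this.ne'
  · intro i
    simp only [An, sub_sub_cancel]
  · intro i
    simp only [Cn, sub_sub_cancel, hlb]
  · intro i
    have := hAd i
    rw [(const_facts k hk' s (γ i) hs (hγ i)).1] at this
    exact this.trans (mul_le_mul_of_nonneg_right (hA0 i) hΔ.le)
  · intro i
    have := hCd i
    rw [(const_facts k hk' s (γ i) hs (hγ i)).2] at this
    exact this.trans (mul_le_mul_of_nonneg_right (hC0 i) hΔ.le)
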